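/- Let h be a real-valued C^4 function on a neighborhood of (0,0) in ℝ² with h(0,0) = 0, h_u(0,0) = 0, and h_uu(0,0) = 0 (inflexion end point condition). Define N₁, N₂, N₃ as in the extended curvature-line equation, set F(u,w,p) = N₁(u,w)p² + N₂(u,w)p + w·N₃(u,w), and let X be the Lie–Cartan vector field X(u,w,p) = (F_p, p·F_p, −(F_u + p·F_w)). Then X(0,0,0) = 0 and the Jacobian matrix of X at (0,0,0) equals [[−a₃₀, −a₂₁, −2b], [0, 0, 0], [0, 0, a₃₀]], where a₃₀ = h_uuu(0,0), a₂₁ = h_uuw(0,0), b = h_uw(0,0). In particular, if a₃₀ ≠ 0 then this Jacobian has eigenvalues −a₃₀, 0 and a₃₀, with (1,0,0) an eigenvector for the eigenvalue −a₃₀ and (b, 0, −a₃₀) an eigenvector for the eigenvalue a₃₀; i.e., the singularity of the Lie–Cartan field at an inflexion, bitransversal end point (a₃₀·b ≠ 0) is a hyperbolic saddle. -/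

import Mathlib

noncomputable section

/-- Partial derivative with respect to the first variable. -/
def pdu (f : ℝ × ℝ → ℝ) (p : ℝ × ℝ) : ℝ := fderiv ℝ f p (1, 0)

/-- Partial derivative with respect to the second variable. -/
def pdw (f : ℝ × ℝ → ℝ) (p : ℝ × ℝ) : ℝ := fderiv ℝ f p (0, 1)

/-- Coefficient `N₁` of the extended curvature-line equation of the end chart. -/
def N1 (h : ℝ × ℝ → ℝ) (p : ℝ × ℝ) : ℝ :=
  p.2 * pdw (pdw h) p * (pdu h p * (p.2 * pdw h p - h p) - p.1)
    - (1 + p.1 ^ 2 + (p.2 * pdw h p - h p) ^ 2) * pdw (pdu h) p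

/-- Coefficient `N₂` of the extended curvature-line equation of the end chart. -/
def N2 (h : ℝ × ℝ → ℝ) (p : ℝ × ℝ) : ℝ :=
  p.2 ^ 2 * (1 + (pdu h p) ^ 2) * pdw (pdw h) p
    - (1 + p.1 ^ 2 + (p.2 * pdw h p - h p) ^ 2) * pdu (pdu h) p

/-- Coefficient `N₃` of the extended curvature-line equation of the end chart. -/
def N3 (h : ℝ × ℝ → ℝ) (p : ℝ × ℝ) : ℝ :=
  p.2 * (1 + (pdu h p) ^ 2) * pdw (pdu h) p
    - (pdu h p * (p.2 * pdw h p - h p) - p.1) * pdu (pdu h) p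

/-!
A product `f * g` with `f` differentiable and vanishing at a point and `g` merely continuous there
is differentiable at that point, with derivative `g • df`. On the section `p = 0` this rule
linearizes the Lie–Cartan field of any equation `A p² + B p + C = 0`: apart from `C_u`, the
derivatives of `A`, `B`, `C` enter the field with a factor `p`. On the line at infinity `w = 0` it
linearizes `N₂`, `N₃` and `(w N₃)_u` wherever `h_uu` vanishes. No third derivative of `h` has to be
differentiated, so `C³` suffices.
-/

theorem hasFDerivAt_mul_of_eq_zero_of_continuousAt {𝕜 E R : Type*} [NontriviallyNormedField 𝕜]
    [NormedAddCommGroup E] [NormedSpace 𝕜 E] [NormedCommRing R] [NormedAlgebra 𝕜 R]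
    {f g : E → R} {f' : E →L[𝕜] R} {x : E} (hf : HasFDerivAt f f' x) (hfx : f x = 0)
    (hg : ContinuousAt g x) : HasFDerivAt (fun y => f y * g y) (g x • f') x := by
  have f_isBigO : f =O[nhds x] fun y => y - x := by simpa [hfx] using hf.isBigO_sub
  have g_sub_isLittleO : (fun y => g y - g x) =o[nhds x] fun _ => (1 : ℝ) :=
    (Asymptotics.isLittleO_one_iff ℝ).2 (tendsto_sub_nhds_zero_iff.2 hg)
  have hasFDerivAt_error : HasFDerivAt (fun y => f y * (g y - g x)) (0 : E →L[𝕜] R) x := by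
    refine .of_isLittleO ?_
    simpa [hfx] using (f_isBigO.norm_right.mul_isLittleO g_sub_isLittleO)
  simpa [mul_sub] using hasFDerivAt_error.fun_add (hf.mul_const (g x))

section PartialDerivatives

variable {f : ℝ × ℝ → ℝ} {q : ℝ × ℝ} {m n : WithTop ℕ∞}

theorem contDiffAt_pdu (hf : ContDiffAt ℝ n f q) (hmn : m + 1 ≤ n) : ContDiffAt ℝ m (pdu f) q :=
  (hf.fderiv_right hmn).clm_apply contDiffAt_const

theorem contDiffAt_pdw (hf : ContDiffAt ℝ n f q) (hmn : m + 1 ≤ n) : ContDiffAt ℝ m (pdw f) q :=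
  (hf.fderiv_right hmn).clm_apply contDiffAt_const

theorem continuousAt_pdu (hf : ContDiffAt ℝ 1 f q) : ContinuousAt (pdu f) q :=
  (contDiffAt_pdu (m := 0) hf (by norm_num)).continuousAt

theorem continuousAt_pdw (hf : ContDiffAt ℝ 1 f q) : ContinuousAt (pdw f) q :=
  (contDiffAt_pdw (m := 0) hf (by norm_num)).continuousAt

theorem eventually_differentiableAt (hf : ContDiffAt ℝ 1 f q) :
    ∀ᶠ y in nhds q, DifferentiableAt ℝ f y :=
  (hf.eventually (by simp)).mono fun _ hy => hy.differentiableAt one_ne_zero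

theorem fderiv_apply_eq_pdu_add_pdw (f : ℝ × ℝ → ℝ) (q v : ℝ × ℝ) :
    fderiv ℝ f q v = pdu f q * v.1 + pdw f q * v.2 := by
  have v_eq : v = v.1 • ((1, 0) : ℝ × ℝ) + v.2 • ((0, 1) : ℝ × ℝ) := by ext <;> simp
  conv_lhs => rw [v_eq, map_add, map_smul, map_smul]
  simp only [pdu, pdw, smul_eq_mul, mul_comm]

theorem hasFDerivAt_snd_mul {u : ℝ} (hf : ContinuousAt f (u, 0)) :
    HasFDerivAt (fun y => y.2 * f y) (f (u, 0) • ContinuousLinearMap.snd ℝ ℝ ℝ) (u, 0) :=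
  hasFDerivAt_mul_of_eq_zero_of_continuousAt hasFDerivAt_snd rfl hf

theorem pdu_snd_mul (hf : DifferentiableAt ℝ f q) :
    pdu (fun y => y.2 * f y) q = q.2 * pdu f q := by
  simp [pdu, (hasFDerivAt_snd.fun_mul hf.hasFDerivAt).fderiv]

theorem pdw_snd_mul {u : ℝ} (hf : ContinuousAt f (u, 0)) :
    pdw (fun y => y.2 * f y) (u, 0) = f (u, 0) := by
  simp [pdw, (hasFDerivAt_snd_mul hf).fderiv]

theorem hasFDerivAt_pdu_snd_mul {u : ℝ} (hf : ContDiffAt ℝ 1 f (u, 0)) :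
    HasFDerivAt (pdu fun y => y.2 * f y)
      (pdu f (u, 0) • ContinuousLinearMap.snd ℝ ℝ ℝ) (u, 0) :=
  (hasFDerivAt_snd_mul (continuousAt_pdu hf)).congr_of_eventuallyEq <|
    (eventually_differentiableAt hf).mono fun _ hy => pdu_snd_mul hy

end PartialDerivatives

section LieCartan

/-- The Lie–Cartan vector field `(F_p, p F_p, -(F_u + p F_w))` of the implicit differential
equation `F(u, w, p) = 0`, `p = dw/du`. -/
def lieCartanField (F : ℝ × ℝ × ℝ → ℝ) (x : ℝ × ℝ × ℝ) : ℝ × ℝ × ℝ :=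
  (fderiv ℝ F x (0, 0, 1), x.2.2 * fderiv ℝ F x (0, 0, 1),
    -(fderiv ℝ F x (1, 0, 0) + x.2.2 * fderiv ℝ F x (0, 1, 0)))

/-- The left-hand side `A p² + B p + C` of a binary differential equation
`A dw² + B du dw + C du² = 0`, in the affine chart `p = dw/du`. -/
def binaryEquation (A B C : ℝ × ℝ → ℝ) (x : ℝ × ℝ × ℝ) : ℝ :=
  A (x.1, x.2.1) * x.2.2 ^ 2 + B (x.1, x.2.1) * x.2.2 + C (x.1, x.2.1)

/-- The projection `(u, w, p) ↦ (u, w)` forgetting the direction coordinate. -/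
def baseProj : ℝ × ℝ × ℝ →L[ℝ] ℝ × ℝ :=
  (ContinuousLinearMap.fst ℝ ℝ (ℝ × ℝ)).prod
    ((ContinuousLinearMap.fst ℝ ℝ ℝ).comp (ContinuousLinearMap.snd ℝ ℝ (ℝ × ℝ)))

@[simp]
theorem baseProj_apply (x : ℝ × ℝ × ℝ) : baseProj x = (x.1, x.2.1) := rfl

/-- The direction coordinate `(u, w, p) ↦ p`. -/
def slopeProj : ℝ × ℝ × ℝ →L[ℝ] ℝ :=
  (ContinuousLinearMap.snd ℝ ℝ ℝ).comp (ContinuousLinearMap.snd ℝ ℝ (ℝ × ℝ))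

@[simp]
theorem slopeProj_apply (x : ℝ × ℝ × ℝ) : slopeProj x = x.2.2 := rfl

theorem hasFDerivAt_comp_baseProj {f : ℝ × ℝ → ℝ} {f' : ℝ × ℝ →L[ℝ] ℝ} {x : ℝ × ℝ × ℝ}
    (hf : HasFDerivAt f f' (x.1, x.2.1)) :
    HasFDerivAt (fun y : ℝ × ℝ × ℝ => f (y.1, y.2.1)) (f'.comp baseProj) x :=
  HasFDerivAt.comp (g := f) x hf baseProj.hasFDerivAt

theorem hasFDerivAt_slope (x : ℝ × ℝ × ℝ) : HasFDerivAt (fun y : ℝ × ℝ × ℝ => y.2.2) slopeProj x :=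
  slopeProj.hasFDerivAt

variable {A B C : ℝ × ℝ → ℝ}

theorem fderiv_binaryEquation_apply {x : ℝ × ℝ × ℝ} (hA : DifferentiableAt ℝ A (x.1, x.2.1))
    (hB : DifferentiableAt ℝ B (x.1, x.2.1)) (hC : DifferentiableAt ℝ C (x.1, x.2.1))
    (v : ℝ × ℝ × ℝ) :
    fderiv ℝ (binaryEquation A B C) x v =
      binaryEquation (fun q => fderiv ℝ A q (v.1, v.2.1)) (fun q => fderiv ℝ B q (v.1, v.2.1))
        (fun q => fderiv ℝ C q (v.1, v.2.1)) x
      + (2 * A (x.1, x.2.1) * x.2.2 + B (x.1, x.2.1)) * v.2.2 := by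
  have hasFDerivAt_binaryEquation :=
    (((hasFDerivAt_comp_baseProj hA.hasFDerivAt).mul ((hasFDerivAt_slope x).pow 2)).add
      ((hasFDerivAt_comp_baseProj hB.hasFDerivAt).mul (hasFDerivAt_slope x))).add
      (hasFDerivAt_comp_baseProj hC.hasFDerivAt)
  refine (congrArg (· v) hasFDerivAt_binaryEquation.fderiv).trans ?_
  simp only [Nat.add_one_sub_one, pow_one, nsmul_eq_mul, Nat.cast_ofNat, add_apply, smul_apply,
    slopeProj_apply, smul_eq_mul, ContinuousLinearMap.comp_apply, baseProj_apply, binaryEquation]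
  ring

-- The last component is arranged as `C_u + p * (…)`, so that the bracket need only be continuous.
theorem lieCartanField_binaryEquation {x : ℝ × ℝ × ℝ} (hA : DifferentiableAt ℝ A (x.1, x.2.1))
    (hB : DifferentiableAt ℝ B (x.1, x.2.1)) (hC : DifferentiableAt ℝ C (x.1, x.2.1)) :
    lieCartanField (binaryEquation A B C) x =
      (B (x.1, x.2.1) + x.2.2 * (2 * A (x.1, x.2.1)),
        x.2.2 * (B (x.1, x.2.1) + x.2.2 * (2 * A (x.1, x.2.1))),
        -(pdu C (x.1, x.2.1) + x.2.2 * (pdu B (x.1, x.2.1) + pdw C (x.1, x.2.1)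
          + x.2.2 * (pdu A (x.1, x.2.1) + pdw B (x.1, x.2.1) + x.2.2 * pdw A (x.1, x.2.1))))) := by
  simp only [lieCartanField, fderiv_binaryEquation_apply hA hB hC, binaryEquation, pdu, pdw,
    Prod.mk_zero_zero, Prod.fst_zero, Prod.snd_zero, map_zero, Prod.mk.injEq]
  refine ⟨?_, ?_, ?_⟩ <;> ring

theorem hasFDerivAt_lieCartanField_binaryEquation {u w : ℝ} {c : ℝ × ℝ →L[ℝ] ℝ}
    (hA : ContDiffAt ℝ 1 A (u, w)) (hB : ContDiffAt ℝ 1 B (u, w)) (hC : ContDiffAt ℝ 1 C (u, w))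
    (hCu : HasFDerivAt (pdu C) c (u, w)) :
    HasFDerivAt (lieCartanField (binaryEquation A B C))
      (((fderiv ℝ B (u, w)).comp baseProj + (2 * A (u, w)) • slopeProj).prod
        ((B (u, w) • slopeProj).prod
          (-(c.comp baseProj + (pdu B (u, w) + pdw C (u, w)) • slopeProj)))) (u, w, 0) := by
  have tendsto_base : Filter.Tendsto (fun x : ℝ × ℝ × ℝ => (x.1, x.2.1)) (nhds (u, w, 0))
      (nhds (u, w)) := baseProj.continuous.tendsto' _ _ rfl
  have continuousAt_base {f : ℝ × ℝ → ℝ} (hf : ContinuousAt f (u, w)) :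
      ContinuousAt (fun x : ℝ × ℝ × ℝ => f (x.1, x.2.1)) (u, w, 0) := hf.tendsto.comp tendsto_base
  have hAu := continuousAt_base (continuousAt_pdu hA)
  have hAw := continuousAt_base (continuousAt_pdw hA)
  have hBu := continuousAt_base (continuousAt_pdu hB)
  have hBw := continuousAt_base (continuousAt_pdw hB)
  have hCw := continuousAt_base (continuousAt_pdw hC)
  have slope_mul {g : ℝ × ℝ × ℝ → ℝ} (hg : ContinuousAt g (u, w, 0)) :
      HasFDerivAt (fun x : ℝ × ℝ × ℝ => x.2.2 * g x) (g (u, w, 0) • slopeProj) (u, w, 0) :=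
    hasFDerivAt_mul_of_eq_zero_of_continuousAt (hasFDerivAt_slope _) rfl hg
  have B_hasFDerivAt : HasFDerivAt B (fderiv ℝ B (u, w)) (u, w) :=
    (hB.differentiableAt one_ne_zero).hasFDerivAt
  have field_eventuallyEq := (tendsto_base.eventually (eventually_differentiableAt hA)).and
    ((tendsto_base.eventually (eventually_differentiableAt hB)).and
      (tendsto_base.eventually (eventually_differentiableAt hC))) |>.mono
    fun _ ⟨dA, dB, dC⟩ => lieCartanField_binaryEquation dA dB dC
  refine .congr_of_eventuallyEq ?_ field_eventuallyEq
  refine ((hasFDerivAt_comp_baseProj B_hasFDerivAt).add (slope_mul (by fun_prop))).prodMk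
    (.prodMk ?_ ((hasFDerivAt_comp_baseProj hCu).add ?_).neg)
  · simpa using slope_mul (g := fun x => B (x.1, x.2.1) + x.2.2 * (2 * A (x.1, x.2.1)))
      (by fun_prop)
  · simpa using slope_mul (g := fun x => pdu B (x.1, x.2.1) + pdw C (x.1, x.2.1) + x.2.2 *
      (pdu A (x.1, x.2.1) + pdw B (x.1, x.2.1) + x.2.2 * pdw A (x.1, x.2.1))) (by fun_prop)

end LieCartan

section CurvatureLines

variable {h : ℝ × ℝ → ℝ}

/-- The left-hand side `N₁ p² + N₂ p + w N₃` of the extended equation of principal curvature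
lines in the end chart given by `h`. -/
def curvatureLineEquation (h : ℝ × ℝ → ℝ) : ℝ × ℝ × ℝ → ℝ :=
  binaryEquation (N1 h) (N2 h) fun q => q.2 * N3 h q

theorem contDiffAt_N1_N2_N3 {q : ℝ × ℝ} {m n : WithTop ℕ∞} (hh : ContDiffAt ℝ n h q)
    (hmn : m + 1 + 1 ≤ n) :
    ContDiffAt ℝ m (N1 h) q ∧ ContDiffAt ℝ m (N2 h) q ∧ ContDiffAt ℝ m (N3 h) q := by
  have hu : ContDiffAt ℝ (m + 1) (pdu h) q := contDiffAt_pdu hh hmn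
  have hw : ContDiffAt ℝ (m + 1) (pdw h) q := contDiffAt_pdw hh hmn
  have huu : ContDiffAt ℝ m (pdu (pdu h)) q := contDiffAt_pdu hu le_rfl
  have huw : ContDiffAt ℝ m (pdw (pdu h)) q := contDiffAt_pdw hu le_rfl
  have hww : ContDiffAt ℝ m (pdw (pdw h)) q := contDiffAt_pdw hw le_rfl
  replace hu : ContDiffAt ℝ m (pdu h) q := hu.of_le le_self_add
  replace hw : ContDiffAt ℝ m (pdw h) q := hw.of_le le_self_add
  replace hh : ContDiffAt ℝ m h q := hh.of_le ((le_self_add.trans le_self_add).trans hmn)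
  refine ⟨?_, ?_, ?_⟩
  · unfold N1; fun_prop
  · unfold N2; fun_prop
  · unfold N3; fun_prop

theorem N1_apply_zero_right (h : ℝ × ℝ → ℝ) (u : ℝ) :
    N1 h (u, 0) = -((1 + u ^ 2 + h (u, 0) ^ 2) * pdw (pdu h) (u, 0)) := by
  simp [N1]

theorem N2_apply_zero_right (h : ℝ × ℝ → ℝ) (u : ℝ) :
    N2 h (u, 0) = -((1 + u ^ 2 + h (u, 0) ^ 2) * pdu (pdu h) (u, 0)) := by
  simp [N2]

theorem N3_apply_zero_right (h : ℝ × ℝ → ℝ) (u : ℝ) :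
    N3 h (u, 0) = (u + pdu h (u, 0) * h (u, 0)) * pdu (pdu h) (u, 0) := by
  simp only [N3, zero_mul, zero_sub]
  ring

theorem hasFDerivAt_N2_of_pdu_pdu_eq_zero {u : ℝ} (hh : ContDiffAt ℝ 2 h (u, 0))
    (huu_diff : DifferentiableAt ℝ (pdu (pdu h)) (u, 0)) (huu : pdu (pdu h) (u, 0) = 0) :
    HasFDerivAt (N2 h) (-((1 + u ^ 2 + h (u, 0) ^ 2) • fderiv ℝ (pdu (pdu h)) (u, 0))) (u, 0) := by
  have hh_cont := hh.continuousAt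
  have hu_cont := continuousAt_pdu (hh.of_le one_le_two)
  have hw_cont := continuousAt_pdw (hh.of_le one_le_two)
  have hww_cont := continuousAt_pdw (contDiffAt_pdw hh one_add_one_eq_two.le)
  have hww_term := hasFDerivAt_snd_mul (u := u)
    (f := fun q => q.2 * (1 + pdu h q ^ 2) * pdw (pdw h) q) (by fun_prop)
  have huu_term := hasFDerivAt_mul_of_eq_zero_of_continuousAt huu_diff.hasFDerivAt huu
    (g := fun q => 1 + q.1 ^ 2 + (q.2 * pdw h q - h q) ^ 2) (by fun_prop)
  have N2_eq : N2 h = (fun q => q.2 * (q.2 * (1 + pdu h q ^ 2) * pdw (pdw h) q)) -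
      fun q => pdu (pdu h) q * (1 + q.1 ^ 2 + (q.2 * pdw h q - h q) ^ 2) := by
    ext q
    simp only [N2, Pi.sub_apply]
    ring
  rw [N2_eq]
  simpa using hww_term.sub huu_term

theorem pdu_N3_of_pdu_pdu_eq_zero {u : ℝ} (hh : ContDiffAt ℝ 2 h (u, 0))
    (huu_diff : DifferentiableAt ℝ (pdu (pdu h)) (u, 0)) (huu : pdu (pdu h) (u, 0) = 0) :
    pdu (N3 h) (u, 0) = (u + pdu h (u, 0) * h (u, 0)) * pdu (pdu (pdu h)) (u, 0) := by
  have hh_cont := hh.continuousAt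
  have hu_cont := continuousAt_pdu (hh.of_le one_le_two)
  have hw_cont := continuousAt_pdw (hh.of_le one_le_two)
  have huw_cont := continuousAt_pdw (contDiffAt_pdu hh one_add_one_eq_two.le)
  have huw_term := hasFDerivAt_snd_mul (u := u)
    (f := fun q => (1 + pdu h q ^ 2) * pdw (pdu h) q) (by fun_prop)
  have huu_term := hasFDerivAt_mul_of_eq_zero_of_continuousAt huu_diff.hasFDerivAt huu
    (g := fun q => pdu h q * (q.2 * pdw h q - h q) - q.1) (by fun_prop)
  have N3_eq : N3 h = (fun q => q.2 * ((1 + pdu h q ^ 2) * pdw (pdu h) q)) -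
      fun q => pdu (pdu h) q * (pdu h q * (q.2 * pdw h q - h q) - q.1) := by
    ext q
    simp only [N3, Pi.sub_apply]
    ring
  rw [pdu, N3_eq, (huw_term.sub huu_term).fderiv]
  simp only [pdu, zero_mul, zero_sub, mul_neg, sub_apply, smul_apply,
    ContinuousLinearMap.coe_snd', smul_eq_mul, mul_zero]
  ring

theorem lieCartanField_curvatureLineEquation_eq_zero {u : ℝ}
    (hh : ContDiffAt ℝ 3 h (u, 0)) (huu : pdu (pdu h) (u, 0) = 0) :
    lieCartanField (curvatureLineEquation h) (u, 0, 0) = 0 := by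
  obtain ⟨hN1, hN2, hN3⟩ := contDiffAt_N1_N2_N3 (m := 1) hh (by norm_num)
  have dN3 := hN3.differentiableAt one_ne_zero
  rw [curvatureLineEquation, lieCartanField_binaryEquation (hN1.differentiableAt one_ne_zero)
    (hN2.differentiableAt one_ne_zero) (differentiableAt_snd.fun_mul dN3)]
  simp [pdu_snd_mul dN3, N2_apply_zero_right, huu]

theorem fderiv_lieCartanField_curvatureLineEquation_apply {u : ℝ}
    (hh : ContDiffAt ℝ 3 h (u, 0)) (huu : pdu (pdu h) (u, 0) = 0) (v : ℝ × ℝ × ℝ) :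
    fderiv ℝ (lieCartanField (curvatureLineEquation h)) (u, 0, 0) v =
      (-((1 + u ^ 2 + h (u, 0) ^ 2) * (pdu (pdu (pdu h)) (u, 0) * v.1
          + pdw (pdu (pdu h)) (u, 0) * v.2.1 + 2 * pdw (pdu h) (u, 0) * v.2.2)),
        0,
        pdu (pdu (pdu h)) (u, 0) * ((1 + u ^ 2 + h (u, 0) ^ 2) * v.2.2
          - (u + pdu h (u, 0) * h (u, 0)) * v.2.1)) := by
  obtain ⟨hN1, hN2, hN3⟩ := contDiffAt_N1_N2_N3 (m := 1) hh (by norm_num)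
  have hh_two : ContDiffAt ℝ 2 h (u, 0) := hh.of_le (by norm_num)
  have huu_diff : DifferentiableAt ℝ (pdu (pdu h)) (u, 0) :=
    (contDiffAt_pdu (contDiffAt_pdu hh two_add_one_eq_three.le)
      one_add_one_eq_two.le).differentiableAt one_ne_zero
  have fderiv_N2 := (hasFDerivAt_N2_of_pdu_pdu_eq_zero hh_two huu_diff huu).fderiv
  have pdu_N2 : pdu (N2 h) (u, 0) =
      -((1 + u ^ 2 + h (u, 0) ^ 2) * pdu (pdu (pdu h)) (u, 0)) := by
    simp [pdu, fderiv_N2]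
  rw [curvatureLineEquation, (hasFDerivAt_lieCartanField_binaryEquation hN1 hN2
    (contDiffAt_snd.mul hN3) (hasFDerivAt_pdu_snd_mul hN3)).fderiv]
  simp only [N1_apply_zero_right, N2_apply_zero_right, N3_apply_zero_right, huu, fderiv_N2, pdu_N2,
    pdw_snd_mul hN3.continuousAt, pdu_N3_of_pdu_pdu_eq_zero hh_two huu_diff huu, mul_zero, neg_zero,
    zero_smul, add_zero, ContinuousLinearMap.prod_apply, add_apply, neg_apply, smul_apply,
    zero_apply, ContinuousLinearMap.comp_apply, ContinuousLinearMap.coe_snd', baseProj_apply,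
    slopeProj_apply, fderiv_apply_eq_pdu_add_pdw, smul_eq_mul, Prod.mk.injEq, true_and]
  constructor <;> ring

end CurvatureLines

section SaddleMatrix

variable {R : Type*} [CommRing R] (a x y z : R)

/-- The shape of the linearized Lie–Cartan field at an inflexion end point, with eigenvalues
`-a`, `0` and `a`. -/
def saddleMatrix : Matrix (Fin 3) (Fin 3) R :=
  !![-a, x, y; 0, 0, 0; 0, z, a]

theorem charpoly_saddleMatrix :
    (saddleMatrix a x y z).charpoly =
      (Polynomial.X + Polynomial.C a) * Polynomial.X * (Polynomial.X - Polynomial.C a) := by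
  simp [saddleMatrix, Matrix.charpoly, Matrix.det_fin_three]

theorem saddleMatrix_mulVec_neg_eigenvector :
    (saddleMatrix a x y z).mulVec ![1, 0, 0] = (-a) • ![1, 0, 0] := by
  ext i
  fin_cases i <;> simp [saddleMatrix, Matrix.mulVec, dotProduct, Fin.sum_univ_three]

theorem saddleMatrix_mulVec_pos_eigenvector {s t : R} (hst : y * t = 2 * a * s) :
    (saddleMatrix a x y z).mulVec ![s, 0, t] = a • ![s, 0, t] := by
  have first_coordinate : -(a * s) + y * t = a * s := by linear_combination hst
  ext i
  fin_cases i <;>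
    simp [saddleMatrix, Matrix.mulVec, dotProduct, Fin.sum_univ_three, first_coordinate]

end SaddleMatrix

-- At `u = 0` with `h(0, 0) = 0` the two constants reduce to `κ = 1` and `μ = 0`.
theorem stmt_5_general {h : ℝ × ℝ → ℝ} {u κ μ : ℝ} (hh : ContDiffAt ℝ 3 h (u, 0))
    (huu : pdu (pdu h) (u, 0) = 0) (hκ : κ = 1 + u ^ 2 + h (u, 0) ^ 2)
    (hμ : μ = u + pdu h (u, 0) * h (u, 0)) :
    let X := lieCartanField (curvatureLineEquation h)
    let a30 := pdu (pdu (pdu h)) (u, 0)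
    let a21 := pdw (pdu (pdu h)) (u, 0)
    let b := pdw (pdu h) (u, 0)
    let M : Matrix (Fin 3) (Fin 3) ℝ :=
      !![-(κ * a30), -(κ * a21), κ * (-2 * b); 0, 0, 0; 0, -(μ * a30), κ * a30]
    X (u, 0, 0) = 0 ∧
    fderiv ℝ X (u, 0, 0) (1, 0, 0) = (-(κ * a30), 0, 0) ∧
    fderiv ℝ X (u, 0, 0) (0, 1, 0) = (-(κ * a21), 0, -(μ * a30)) ∧
    fderiv ℝ X (u, 0, 0) (0, 0, 1) = (κ * (-2 * b), 0, κ * a30) ∧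
    M.charpoly = (Polynomial.X + Polynomial.C (κ * a30)) * Polynomial.X *
      (Polynomial.X - Polynomial.C (κ * a30)) ∧
    M.mulVec ![1, 0, 0] = (-(κ * a30)) • ![1, 0, 0] ∧
    M.mulVec ![b, 0, -a30] = (κ * a30) • ![b, 0, -a30] := by
  intro X a30 a21 b M
  have fderiv_X (v : ℝ × ℝ × ℝ) : fderiv ℝ X (u, 0, 0) v =
      (-(κ * (a30 * v.1 + a21 * v.2.1 + 2 * b * v.2.2)), 0,
        a30 * (κ * v.2.2 - μ * v.2.1)) := by
    rw [hκ, hμ]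
    exact fderiv_lieCartanField_curvatureLineEquation_apply hh huu v
  refine ⟨lieCartanField_curvatureLineEquation_eq_zero hh huu, ?_, ?_, ?_,
    charpoly_saddleMatrix .., saddleMatrix_mulVec_neg_eigenvector ..,
    saddleMatrix_mulVec_pos_eigenvector _ _ _ _ (by ring)⟩
  all_goals simp [fderiv_X, mul_comm]

/-- at an inflexion end point (`a = h_uu(0,0) = 0`), the Lie–Cartan vector
field of the extended curvature-line equation vanishes at the origin, its Jacobian there is
`[[−a₃₀, −a₂₁, −2b], [0,0,0], [0,0,a₃₀]]`, and for `a₃₀ ≠ 0` this matrix has eigenvalues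
`−a₃₀, 0, a₃₀` with eigenvectors `(1,0,0)` and `(b,0,−a₃₀)` for `−a₃₀` and `a₃₀`:
a hyperbolic saddle at a bitransversal inflexion end point (`a₃₀·b ≠ 0`). -/
theorem stmt_5 (U : Set (ℝ × ℝ)) (hU : U ∈ nhds ((0, 0) : ℝ × ℝ)) (h : ℝ × ℝ → ℝ)
    (hh : ContDiffOn ℝ 4 h U) (h0 : h (0, 0) = 0) (hu0 : pdu h (0, 0) = 0)
    (huu0 : pdu (pdu h) (0, 0) = 0)
    (F : ℝ × ℝ × ℝ → ℝ)
    (hF : F = fun x => N1 h (x.1, x.2.1) * x.2.2 ^ 2 + N2 h (x.1, x.2.1) * x.2.2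
      + x.2.1 * N3 h (x.1, x.2.1))
    (X : ℝ × ℝ × ℝ → ℝ × ℝ × ℝ)
    (hX : X = fun x => (fderiv ℝ F x (0, 0, 1), x.2.2 * fderiv ℝ F x (0, 0, 1),
      -(fderiv ℝ F x (1, 0, 0) + x.2.2 * fderiv ℝ F x (0, 1, 0)))) :
    X (0, 0, 0) = 0 ∧
    (fderiv ℝ X (0, 0, 0)) (1, 0, 0) = (-(pdu (pdu (pdu h)) (0, 0)), 0, 0) ∧
    (fderiv ℝ X (0, 0, 0)) (0, 1, 0) = (-(pdw (pdu (pdu h)) (0, 0)), 0, 0) ∧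
    (fderiv ℝ X (0, 0, 0)) (0, 0, 1) =
      (-2 * pdw (pdu h) (0, 0), 0, pdu (pdu (pdu h)) (0, 0)) ∧
    (pdu (pdu (pdu h)) (0, 0) ≠ 0 →
      (let a30 := pdu (pdu (pdu h)) (0, 0)
       let a21 := pdw (pdu (pdu h)) (0, 0)
       let b := pdw (pdu h) (0, 0)
       let M : Matrix (Fin 3) (Fin 3) ℝ := !![-a30, -a21, -2 * b; 0, 0, 0; 0, 0, a30]
       M.charpoly = (Polynomial.X + Polynomial.C a30) * Polynomial.X *
         (Polynomial.X - Polynomial.C a30) ∧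
       M.mulVec ![1, 0, 0] = (-a30) • ![1, 0, 0] ∧
       M.mulVec ![b, 0, -a30] = a30 • ![b, 0, -a30])) := by
  subst hF hX
  have general := stmt_5_general (κ := 1) (μ := 0) ((hh.contDiffAt hU).of_le (by norm_num)) huu0
    (by simp [h0]) (by simp [h0])
  simp only [one_mul, zero_mul, neg_zero] at general
  obtain ⟨field_zero, column_u, column_w, column_p, eigen⟩ := general
  exact ⟨field_zero, column_u, column_w, column_p, fun _ => eigen⟩
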